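/- The words 01 and 10 each have frequency 1/2 − √5/10 in the sequence T: the limit as x → ∞ of (1/x)·#{N < x : T(N) = 0 and T(N+1) = 1} equals 1/2 − √5/10, and the limit as x → ∞ of (1/x)·#{N < x : T(N) = 1 and T(N+1) = 0} equals 1/2 − √5/10. -/

import Mathlib

/-- The golden mean φ = (1+√5)/2. -/
noncomputable def phi : ℝ := (1 + Real.sqrt 5) / 2

/-- `d : ℤ → ℕ` is a base-phi expansion of `N`: finitely supported, digits at most 1,
no two consecutive digits equal 1, and `∑ d i * φ^i = N`. -/
def IsBasePhi (N : ℕ) (d : ℤ → ℕ) : Prop :=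
  {i : ℤ | d i ≠ 0}.Finite ∧ (∀ i, d i ≤ 1) ∧ (∀ i, d i * d (i + 1) = 0) ∧
    ∑' i : ℤ, (d i : ℝ) * phi ^ i = (N : ℝ)

/-- The Lucas numbers: L 0 = 2, L 1 = 1, L (n+2) = L (n+1) + L n. -/
def Lucas : ℕ → ℕ
  | 0 => 2
  | 1 => 1
  | n + 2 => Lucas (n + 1) + Lucas n

/-- The sum of the digits of a (finitely supported) digit function. -/
noncomputable def digitSum (d : ℤ → ℕ) : ℕ := ∑' i : ℤ, d i

/-- `r` is a sum of `c` distinct powers of `phi`, no two of them consecutive, with exponents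
between `lo` and `hi`. -/
def PhiRep (lo hi : ℤ) (r : ℝ) (c : ℕ) : Prop :=
  ∃ S : Finset ℤ, (∀ i ∈ S, lo ≤ i ∧ i ≤ hi) ∧ (∀ i ∈ S, i + 1 ∉ S) ∧
    ∑ i ∈ S, phi ^ i = r ∧ S.card = c

namespace PhiRep

variable {lo hi j : ℤ} {r s : ℝ} {c : ℕ}

lemma zero (lo hi : ℤ) : PhiRep lo hi 0 0 :=
  ⟨∅, by simp, by simp, by simp, by simp⟩

lemma mono {lo' hi' : ℤ} (h : PhiRep lo hi r c) (hlo : lo' ≤ lo) (hhi : hi ≤ hi') :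
    PhiRep lo' hi' r c := by
  obtain ⟨S, h1, h2, h3, h4⟩ := h
  exact ⟨S, fun i hi => ⟨hlo.trans (h1 i hi).1, (h1 i hi).2.trans hhi⟩, h2, h3, h4⟩

lemma insert_top (h : PhiRep lo hi r c) (hj : hi + 2 ≤ j) (hlo : lo ≤ j)
    (hs : s = r + phi ^ j) : PhiRep lo j s (c + 1) := by
  obtain ⟨S, h1, h2, h3, h4⟩ := h
  have hjS : j ∉ S := fun hm => by have := h1 j hm; omega
  refine ⟨insert j S, ?_, ?_, ?_, ?_⟩
  · intro i hi'
    rcases Finset.mem_insert.1 hi' with rfl | hi'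
    · exact ⟨hlo, le_rfl⟩
    · have := h1 i hi'; omega
  · intro i hi' hi''
    rcases Finset.mem_insert.1 hi' with rfl | hi' <;> rcases Finset.mem_insert.1 hi'' with h | hi''
    · omega
    · have := h1 _ hi''; omega
    · have := h1 _ hi'; omega
    · exact h2 i hi' hi''
  · rw [Finset.sum_insert hjS, h3, hs, add_comm]
  · rw [Finset.card_insert_of_notMem hjS, h4]

lemma insert_bot (h : PhiRep lo hi r c) (hj : j + 2 ≤ lo) (hhi : j ≤ hi)
    (hs : s = r + phi ^ j) : PhiRep j hi s (c + 1) := by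
  obtain ⟨S, h1, h2, h3, h4⟩ := h
  have hjS : j ∉ S := fun hm => by have := h1 j hm; omega
  refine ⟨insert j S, ?_, ?_, ?_, ?_⟩
  · intro i hi'
    rcases Finset.mem_insert.1 hi' with rfl | hi'
    · exact ⟨le_rfl, hhi⟩
    · have := h1 i hi'; omega
  · intro i hi' hi''
    rcases Finset.mem_insert.1 hi' with rfl | hi' <;> rcases Finset.mem_insert.1 hi'' with h | hi''
    · omega
    · have := h1 _ hi''; omega
    · have := h1 _ hi'; omega
    · exact h2 i hi' hi''
  · rw [Finset.sum_insert hjS, h3, hs, add_comm]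
  · rw [Finset.card_insert_of_notMem hjS, h4]

/-- A representation of a natural number by powers of `phi` is a base-phi expansion. -/
lemma exists_isBasePhi {N : ℕ} (h : PhiRep lo hi N c) :
    ∃ d, IsBasePhi N d ∧ digitSum d = c := by
  classical
  obtain ⟨S, -, h2, h3, h4⟩ := h
  refine ⟨fun i => if i ∈ S then 1 else 0, ⟨?_, ?_, ?_, ?_⟩, ?_⟩
  · exact S.finite_toSet.subset fun i hi => by
      by_contra hS
      exact hi (if_neg hS)
  · intro i
    dsimp only
    split_ifs <;> simp
  · intro i
    by_cases hi : i ∈ S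
    · simp [h2 i hi]
    · simp [hi]
  · rw [tsum_eq_sum (s := S) fun i hi => by simp [hi], ← h3]
    exact Finset.sum_congr rfl fun i hi => by simp [hi]
  · rw [digitSum, tsum_eq_sum (s := S) fun i hi => by simp [hi], ← h4, Finset.card_eq_sum_ones]
    exact Finset.sum_congr rfl fun i hi => by simp [hi]

end PhiRep

/-- The Lucas numbers of even index. -/
def lucasEven (n : ℕ) : ℕ := Lucas (2 * n)

/-- The Lucas numbers of odd index. -/
def lucasOdd (n : ℕ) : ℕ := Lucas (2 * n + 1)

lemma lucasEven_zero : lucasEven 0 = 2 := rfl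

lemma lucasOdd_zero : lucasOdd 0 = 1 := rfl

lemma lucasEven_succ (n : ℕ) : lucasEven (n + 1) = lucasOdd n + lucasEven n := rfl

lemma lucasOdd_succ (n : ℕ) : lucasOdd (n + 1) = lucasEven (n + 1) + lucasOdd n := rfl

lemma two_le_lucasEven (n : ℕ) : 2 ≤ lucasEven n := by
  induction n with
  | zero => exact le_rfl
  | succ n ih => rw [lucasEven_succ]; omega

lemma phi_pos : 0 < phi := by unfold phi; positivity

lemma phi_sq : phi ^ 2 = phi + 1 := by
  unfold phi
  nlinarith [Real.sq_sqrt (show (0 : ℝ) ≤ 5 by norm_num)]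

lemma phi_inv : phi⁻¹ = phi - 1 := by
  rw [inv_eq_iff_eq_inv, eq_comm, inv_eq_iff_eq_inv, eq_comm]
  refine inv_eq_of_mul_eq_one_right ?_
  linear_combination phi_sq

lemma phi_zpow_succ (k : ℤ) : phi ^ (k + 1) = phi ^ k * phi := zpow_add_one₀ phi_pos.ne' k

lemma phi_zpow_add_two (k : ℤ) : phi ^ (k + 2) = phi ^ (k + 1) + phi ^ k := by
  rw [show k + 2 = k + 1 + 1 by ring, phi_zpow_succ, phi_zpow_succ]
  linear_combination phi ^ k * phi_sq

/-- Binet's formulas for the Lucas numbers. -/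
lemma lucas_eq_phi_zpow (n : ℕ) :
    (lucasEven n : ℝ) = phi ^ (2 * n : ℤ) + phi ^ (-(2 * n) : ℤ) ∧
    (lucasOdd n : ℝ) = phi ^ (2 * n + 1 : ℤ) - phi ^ (-(2 * n) - 1 : ℤ) := by
  induction n with
  | zero =>
    simp only [lucasEven_zero, lucasOdd_zero]
    norm_num [phi_inv]
  | succ n ih =>
    have h1 := phi_zpow_add_two (2 * n)
    have h2 := phi_zpow_add_two (2 * n + 1)
    have h3 := phi_zpow_add_two (-(2 * n) - 2)
    have h4 := phi_zpow_add_two (-(2 * n) - 3)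
    ring_nf at h1 h2 h3 h4 ih
    rw [lucasOdd_succ, lucasEven_succ]
    push_cast
    ring_nf
    constructor <;> linarith

/-- The part of `N` left over by the outermost digits of its base-phi expansion, for `N` strictly
between `lucasOdd n` and `lucasEven (n + 1)`. -/
noncomputable def phiCore (n N : ℕ) : ℝ :=
  N - phi ^ (2 * n + 1 : ℤ) - phi ^ (-(2 * n) - 2 : ℤ)

lemma phiCore_zero_two : phiCore 0 2 = 0 := by
  have h1 := phi_zpow_add_two (-2)
  have h2 := phi_zpow_add_two (-1)
  unfold phiCore
  norm_num at h1 h2 ⊢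
  linarith

lemma PhiRep.one : PhiRep 0 0 (1 : ℕ) 1 := by
  simpa using (PhiRep.zero 0 (-2)).insert_top (j := 0) (by norm_num) le_rfl (s := 1) (by simp)

section Recurrences

variable {n N k c : ℕ}

lemma PhiRep.of_core (h : PhiRep (-(2 * n) + 1) (2 * n - 1) (phiCore n N) c) :
    PhiRep (-(2 * n) - 2) (2 * n + 1) N (c + 2) := by
  refine ((h.insert_top (j := 2 * n + 1) (by omega) (by omega) rfl).insert_bot
    (j := -(2 * n) - 2) (by omega) (by omega) ?_)
  unfold phiCore
  ring

lemma PhiRep.add_lucasEven (h : PhiRep (-(2 * n)) (2 * n) k c) :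
    PhiRep (-(2 * n) - 2) (2 * n + 2) (lucasEven (n + 1) + k : ℕ) (c + 2) := by
  refine ((h.insert_top (j := 2 * n + 2) (by omega) (by omega) rfl).insert_bot
    (j := -(2 * n) - 2) (by omega) (by omega) ?_)
  have := (lucas_eq_phi_zpow (n + 1)).1
  push_cast at this ⊢
  ring_nf at this ⊢
  linarith

lemma PhiRep.core_add_lucasEven (h : PhiRep (-(2 * n) + 1) (2 * n - 1) (phiCore n N) c) :
    PhiRep (-(2 * (n + 1 : ℕ)) + 1) (2 * (n + 1 : ℕ) - 1)
      (phiCore (n + 1) (N + lucasEven (n + 1))) (c + 1) := by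
  refine (h.insert_bot (j := -(2 * n) - 1) (by omega) (by omega) (s := _) ?_).mono
    (by push_cast; omega) (by push_cast; omega)
  have h0 := (lucas_eq_phi_zpow (n + 1)).1
  have h1 := phi_zpow_add_two (2 * n + 1)
  have h2 := phi_zpow_add_two (-(2 * n) - 3)
  have h3 := phi_zpow_add_two (-(2 * n) - 4)
  unfold phiCore
  push_cast at h0 ⊢
  ring_nf at h0 h1 h2 h3 ⊢
  linarith

lemma PhiRep.core_add_lucasOdd (h : PhiRep (-(2 * n) + 1) (2 * n - 1) (phiCore n N) c) :
    PhiRep (-(2 * (n + 1 : ℕ)) + 1) (2 * (n + 1 : ℕ) - 1)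
      (phiCore (n + 1) (N + lucasOdd (n + 1))) (c + 1) := by
  refine (h.insert_top (j := 2 * n + 1) (by omega) (by omega) (s := _) ?_).mono
    (by push_cast; omega) (by push_cast; omega)
  have h0 := (lucas_eq_phi_zpow (n + 1)).2
  have h1 := phi_zpow_add_two (-(2 * n) - 4)
  unfold phiCore
  push_cast at h0 ⊢
  ring_nf at h0 h1 ⊢
  linarith

lemma PhiRep.core_middle (h : PhiRep (-(2 * n)) (2 * n) k c) :
    PhiRep (-(2 * (n + 2 : ℕ)) + 1) (2 * (n + 2 : ℕ) - 1)
      (phiCore (n + 2) (lucasOdd (n + 2) + lucasEven (n + 1) + k)) (c + 2) := by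
  refine ((h.insert_top (j := 2 * n + 2) (by omega) (by omega) rfl).insert_bot
    (j := -(2 * n) - 3) (by omega) (by omega) (s := _) ?_).mono
    (by push_cast; omega) (by push_cast; omega)
  have h0 := (lucas_eq_phi_zpow (n + 1)).1
  have h1 := (lucas_eq_phi_zpow (n + 2)).2
  have h2 := phi_zpow_add_two (-(2 * n) - 4)
  have h3 := phi_zpow_add_two (-(2 * n) - 6)
  unfold phiCore
  push_cast at h0 h1 ⊢
  ring_nf at h0 h1 h2 h3 ⊢
  linarith

end Recurrences

lemma exists_phiRep (n : ℕ) :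
    (∀ k ≤ lucasOdd n, ∃ c, PhiRep (-(2 * n)) (2 * n) k c) ∧
    (∀ N, lucasOdd n < N → N < lucasEven (n + 1) →
      ∃ c, PhiRep (-(2 * n) + 1) (2 * n - 1) (phiCore n N) c) := by
  induction n using Nat.strong_induction_on with
  | _ n ih =>
  rcases n with _ | n
  · constructor
    · intro k hk
      rw [lucasOdd_zero] at hk
      interval_cases k
      · exact ⟨0, by simpa using PhiRep.zero 0 0⟩
      · exact ⟨1, by simpa using PhiRep.one⟩
    · intro N h1 h2
      rw [lucasEven_succ, lucasEven_zero, lucasOdd_zero] at h2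
      rw [lucasOdd_zero] at h1
      obtain rfl : N = 2 := by omega
      refine ⟨0, ?_⟩
      rw [phiCore_zero_two]
      exact PhiRep.zero _ _
  obtain ⟨ih1, ih2⟩ := ih n (by omega)
  have ha := lucasEven_succ n
  have hb := lucasOdd_succ n
  have ha' := lucasEven_succ (n + 1)
  constructor
  · intro k hk
    rcases le_or_gt k (lucasOdd n) with h1 | h1
    · obtain ⟨c, hc⟩ := ih1 k h1
      exact ⟨c, hc.mono (by push_cast; omega) (by push_cast; omega)⟩
    rcases lt_or_ge k (lucasEven (n + 1)) with h2 | h2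
    · obtain ⟨c, hc⟩ := ih2 k h1 h2
      exact ⟨_, hc.of_core.mono (by push_cast; omega) (by push_cast; omega)⟩
    · obtain ⟨j, rfl⟩ := Nat.exists_eq_add_of_le h2
      obtain ⟨c, hc⟩ := ih1 j (by omega)
      exact ⟨_, hc.add_lucasEven.mono (by push_cast; omega) (by push_cast; omega)⟩
  · intro N h1 h2
    by_cases hI : N < 2 * lucasEven (n + 1)
    · obtain ⟨j, rfl⟩ := Nat.exists_eq_add_of_le' (show lucasEven (n + 1) ≤ N by omega)
      obtain ⟨c, hc⟩ := ih2 j (by omega) (by omega)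
      exact ⟨_, hc.core_add_lucasEven⟩
    by_cases hK : lucasOdd n + lucasOdd (n + 1) < N
    · obtain ⟨j, rfl⟩ := Nat.exists_eq_add_of_le' (show lucasOdd (n + 1) ≤ N by omega)
      obtain ⟨c, hc⟩ := ih2 j (by omega) (by omega)
      exact ⟨_, hc.core_add_lucasOdd⟩
    rcases n with _ | n
    · simp only [lucasEven_succ, lucasOdd_succ, lucasEven_zero, lucasOdd_zero] at *
      omega
    have ha'' := lucasEven_succ n
    have hb' := lucasOdd_succ n
    rw [show n + 1 + 1 = n + 2 from rfl] at *
    obtain ⟨j, rfl⟩ := Nat.exists_eq_add_of_le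
      (show lucasOdd (n + 2) + lucasEven (n + 1) ≤ N by omega)
    obtain ⟨c, hc⟩ := (ih n (by omega)).1 j (by omega)
    exact ⟨_, hc.core_middle⟩

/-- The recurrences satisfied by the parity of the number of digits of base-phi expansions. -/
structure IsPhiParity (T : ℕ → ℕ) : Prop where
  le_one : ∀ N, T N ≤ 1
  zero : T 0 = 0
  one : T 1 = 1
  two : T 2 = 0
  even_add : ∀ n k, k ≤ lucasOdd n → T (lucasEven (n + 1) + k) = T k
  add_even : ∀ n N, lucasOdd n < N → N < lucasEven (n + 1) →
    T (N + lucasEven (n + 1)) + T N = 1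
  add_odd : ∀ n N, lucasOdd n < N → N < lucasEven (n + 1) →
    T (N + lucasOdd (n + 1)) + T N = 1
  middle : ∀ n k, k ≤ lucasOdd n → T (lucasOdd (n + 2) + lucasEven (n + 1) + k) = T k

lemma two_pow_le_lucasOdd (n : ℕ) : 2 ^ n ≤ lucasOdd n := by
  induction n with
  | zero => exact le_rfl
  | succ n ih => rw [lucasOdd_succ, lucasEven_succ, pow_succ]; omega

lemma isPhiParity_of_digitSum (T : ℕ → ℕ)
    (hT : ∀ (N : ℕ) (d : ℤ → ℕ), IsBasePhi N d → T N = digitSum d % 2) : IsPhiParity T := by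
  have key : ∀ {lo hi : ℤ} {N c : ℕ}, PhiRep lo hi N c → T N = c % 2 := by
    intro lo hi N c h
    obtain ⟨d, hd, rfl⟩ := h.exists_isBasePhi
    exact hT N d hd
  refine ⟨fun N => ?_, ?_, ?_, ?_, fun n k hk => ?_, fun n N h1 h2 => ?_, fun n N h1 h2 => ?_,
    fun n k hk => ?_⟩
  · obtain ⟨c, hc⟩ := (exists_phiRep N).1 N (Nat.lt_two_pow_self.le.trans (two_pow_le_lucasOdd N))
    rw [key hc]
    omega
  · exact key (N := 0) (by simpa using PhiRep.zero 0 0)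
  · exact key PhiRep.one
  · have h1 := PhiRep.zero (-(2 * (0 : ℕ)) + 1) (2 * (0 : ℕ) - 1)
    rw [← phiCore_zero_two] at h1
    exact key h1.of_core
  · obtain ⟨c, hc⟩ := (exists_phiRep n).1 k hk
    rw [key hc, key hc.add_lucasEven]
    omega
  · obtain ⟨c, hc⟩ := (exists_phiRep n).2 N h1 h2
    rw [key hc.of_core, key hc.core_add_lucasEven.of_core]
    omega
  · obtain ⟨c, hc⟩ := (exists_phiRep n).2 N h1 h2
    rw [key hc.of_core, key hc.core_add_lucasOdd.of_core]
    omega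
  · obtain ⟨c, hc⟩ := (exists_phiRep n).1 k hk
    rw [key hc, key hc.core_middle.of_core]
    omega

/-- The number of `i < k` such that `T` takes the same value at `a + i` and `a + i + 1`. -/
def stayCount (T : ℕ → ℕ) (a k : ℕ) : ℕ :=
  ∑ i ∈ Finset.range k, if T (a + i) = T (a + i + 1) then 1 else 0

section StayCount

variable {T : ℕ → ℕ} {a b k : ℕ}

lemma stayCount_zero : stayCount T a 0 = 0 := rfl

lemma stayCount_one : stayCount T a 1 = if T a = T (a + 1) then 1 else 0 := by
  rw [stayCount, Finset.sum_range_one, add_zero]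

lemma stayCount_add (a k l : ℕ) :
    stayCount T a (k + l) = stayCount T a k + stayCount T (a + k) l := by
  simp only [stayCount, Finset.sum_range_add, add_assoc]

lemma stayCount_congr (h : ∀ i ≤ k, T (b + i) = T (a + i)) :
    stayCount T b k = stayCount T a k := by
  refine Finset.sum_congr rfl fun i hi => ?_
  have hi := Finset.mem_range.1 hi
  have h1 := h i hi.le
  have h2 := h (i + 1) hi
  simp only [← add_assoc] at h2
  rw [h1, h2]

lemma stayCount_compl (h : ∀ i ≤ k, T (b + i) + T (a + i) = 1) :
    stayCount T b k = stayCount T a k := by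
  refine Finset.sum_congr rfl fun i hi => ?_
  have hi := Finset.mem_range.1 hi
  have h1 := h i hi.le
  have h2 := h (i + 1) hi
  simp only [← add_assoc] at h2
  exact if_congr (by omega) rfl rfl

end StayCount

namespace IsPhiParity

variable {T : ℕ → ℕ} (h : IsPhiParity T)

include h

lemma lucasOdd_eq (n : ℕ) : T (lucasOdd n) = 1 := by
  induction n with
  | zero => exact h.one
  | succ n ih => rw [lucasOdd_succ, h.even_add n _ le_rfl, ih]

lemma lucasEven_eq (n : ℕ) : T (lucasEven (n + 1)) = 0 := by
  rw [← add_zero (lucasEven (n + 1)), h.even_add n 0 (Nat.zero_le _), h.zero]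

lemma lucasOdd_add_one (n : ℕ) : T (lucasOdd n + 1) = n % 2 := by
  induction n with
  | zero => exact h.two
  | succ n ih =>
    have h1 := h.add_even n (lucasOdd n + 1) (by omega)
      (by have := two_le_lucasEven n; rw [lucasEven_succ]; omega)
    rw [show lucasOdd n + 1 + lucasEven (n + 1) = lucasOdd (n + 1) + 1 by
      rw [lucasOdd_succ]; omega] at h1
    omega

lemma lucasEven_sub_one (n : ℕ) : T (lucasEven (n + 1) - 1) = n % 2 := by
  induction n with
  | zero => exact h.two
  | succ n ih =>
    have h0 := two_le_lucasEven n
    have h2 := lucasEven_succ n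
    have h1 := h.add_odd n (lucasEven (n + 1) - 1) (by omega) (by omega)
    rw [show lucasEven (n + 1) - 1 + lucasOdd (n + 1) = lucasEven (n + 1 + 1) - 1 by
      rw [lucasEven_succ (n + 1)]; omega] at h1
    omega

lemma stayCount_even (n k : ℕ) (hk : k ≤ lucasOdd n) :
    stayCount T (lucasEven (n + 1)) k = stayCount T 0 k :=
  stayCount_congr fun i hi => by rw [zero_add, h.even_add n i (hi.trans hk)]

lemma stayCount_middle (n k : ℕ) (hk : k ≤ lucasOdd n) :
    stayCount T (lucasOdd (n + 2) + lucasEven (n + 1)) k = stayCount T 0 k :=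
  stayCount_congr fun i hi => by rw [zero_add, h.middle n i (hi.trans hk)]

lemma stayCount_left (n k : ℕ) (hk : k + 2 ≤ lucasEven n) :
    stayCount T (lucasOdd (n + 1) + 1) k = stayCount T (lucasOdd n + 1) k :=
  stayCount_compl fun i hi => by
    have h1 := h.add_even n (lucasOdd n + 1 + i) (by omega) (by rw [lucasEven_succ]; omega)
    rwa [show lucasOdd n + 1 + i + lucasEven (n + 1) = lucasOdd (n + 1) + 1 + i by
      rw [lucasOdd_succ]; omega] at h1

lemma stayCount_right (n k : ℕ) (hk : k + 2 ≤ lucasEven n) :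
    stayCount T (lucasOdd (n + 1) + lucasOdd n + 1) k = stayCount T (lucasOdd n + 1) k :=
  stayCount_compl fun i hi => by
    have h1 := h.add_odd n (lucasOdd n + 1 + i) (by omega) (by rw [lucasEven_succ]; omega)
    rwa [show lucasOdd n + 1 + i + lucasOdd (n + 1) = lucasOdd (n + 1) + lucasOdd n + 1 + i by
      omega] at h1

lemma stayCount_middle_left (n : ℕ) :
    stayCount T (lucasOdd (n + 2) + lucasEven (n + 1) - 1) 1 = (n + 1) % 2 := by
  have h0 := two_le_lucasEven (n + 1)
  have ha : lucasEven (n + 2) = lucasOdd (n + 1) + lucasEven (n + 1) := lucasEven_succ _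
  have hb : lucasOdd (n + 2) = lucasEven (n + 2) + lucasOdd (n + 1) := lucasOdd_succ _
  have h1 := h.add_even (n + 1) (lucasEven (n + 2) - 1) (by omega)
    (Nat.sub_lt (by omega) one_pos)
  rw [show lucasEven (n + 2) - 1 + lucasEven (n + 1 + 1) =
      lucasOdd (n + 2) + lucasEven (n + 1) - 1 by
        rw [show n + 1 + 1 = n + 2 from rfl]; omega, h.lucasEven_sub_one] at h1
  have h2 := h.middle n 0 (Nat.zero_le _)
  rw [add_zero, h.zero] at h2
  rw [stayCount_one, Nat.sub_add_cancel (by omega), h2]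
  split_ifs <;> omega

lemma stayCount_middle_right (n : ℕ) :
    stayCount T (lucasOdd (n + 2) + lucasEven (n + 1) + lucasOdd n) 1 = n % 2 := by
  have h0 := two_le_lucasEven (n + 1)
  have ha := lucasEven_succ (n + 1)
  have hb := lucasOdd_succ n
  have h1 := h.add_odd (n + 1) (lucasOdd (n + 1) + 1) (by omega) (by omega)
  rw [show lucasOdd (n + 1) + 1 + lucasOdd (n + 1 + 1) =
      lucasOdd (n + 2) + lucasEven (n + 1) + lucasOdd n + 1 by
        rw [show n + 1 + 1 = n + 2 from rfl]; omega, h.lucasOdd_add_one] at h1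
  have h2 := h.middle n _ le_rfl
  rw [h.lucasOdd_eq] at h2
  rw [stayCount_one, h2]
  split_ifs <;> omega

lemma stayCount_lucasOdd_one (n : ℕ) : stayCount T (lucasOdd n) 1 = n % 2 := by
  rw [stayCount_one, h.lucasOdd_eq, h.lucasOdd_add_one]
  split_ifs <;> omega

lemma stayCount_lucasEven_sub_one (n : ℕ) :
    stayCount T (lucasEven (n + 1) - 1) 1 = (n + 1) % 2 := by
  have h0 := two_le_lucasEven (n + 1)
  rw [stayCount_one, Nat.sub_add_cancel (by omega), h.lucasEven_eq, h.lucasEven_sub_one]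
  split_ifs <;> omega

/-- Counting stays above `lucasOdd (n + 2)`, into the middle part of the interval up to
`lucasEven (n + 3)`, which repeats an initial segment of `T`. -/
lemma stayCount_split_middle (n j : ℕ) :
    stayCount T (lucasOdd (n + 2) + 1) (lucasEven (n + 1) - 1 + j) =
      stayCount T (lucasOdd (n + 1) + 1) (lucasEven (n + 1) - 2) + (n + 1) % 2 +
        stayCount T (lucasOdd (n + 2) + lucasEven (n + 1)) j := by
  have h0 := two_le_lucasEven (n + 1)
  rw [← h.stayCount_left (n + 1) (lucasEven (n + 1) - 2) (by omega), ← h.stayCount_middle_left n,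
    show lucasEven (n + 1) - 1 + j = lucasEven (n + 1) - 2 + 1 + j by omega, stayCount_add,
    stayCount_add, show lucasOdd (n + 1 + 1) + 1 + (lucasEven (n + 1) - 2) =
      lucasOdd (n + 2) + lucasEven (n + 1) - 1 by rw [show n + 1 + 1 = n + 2 from rfl]; omega,
    show lucasOdd (n + 2) + 1 + (lucasEven (n + 1) - 2 + 1) =
      lucasOdd (n + 2) + lucasEven (n + 1) by omega]

lemma stayCount_split_right (n j : ℕ) (hj : j + 2 ≤ lucasEven (n + 1)) :
    stayCount T (lucasOdd (n + 2) + 1) (lucasEven (n + 1) + lucasOdd n + j) =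
      stayCount T (lucasOdd (n + 1) + 1) (lucasEven (n + 1) - 2) + 1 +
        stayCount T 0 (lucasOdd n) + stayCount T (lucasOdd (n + 1) + 1) j := by
  have h0 := two_le_lucasEven (n + 1)
  have hb := lucasOdd_succ n
  have h1 := h.stayCount_split_middle n (lucasOdd n + (1 + j))
  rw [stayCount_add _ (lucasOdd n), stayCount_add _ 1, h.stayCount_middle_right,
    h.stayCount_middle n _ le_rfl, show lucasOdd (n + 2) + lucasEven (n + 1) + lucasOdd n + 1 =
      lucasOdd (n + 1 + 1) + lucasOdd (n + 1) + 1 by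
        rw [show n + 1 + 1 = n + 2 from rfl]; omega, h.stayCount_right _ j hj] at h1
  rw [show lucasEven (n + 1) + lucasOdd n + j =
    lucasEven (n + 1) - 1 + (lucasOdd n + (1 + j)) by omega, h1]
  omega

lemma stayCount_zero_split (n j : ℕ) :
    stayCount T 0 (lucasOdd n + 1 + j) =
      stayCount T 0 (lucasOdd n) + n % 2 + stayCount T (lucasOdd n + 1) j := by
  rw [stayCount_add, stayCount_add, zero_add, zero_add, h.stayCount_lucasOdd_one]

/-- The number of stays below a Lucas number is, up to one, a Fibonacci number. -/
lemma stayCount_eq_fib (n : ℕ) :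
    stayCount T (lucasOdd n + 1) (lucasEven n - 2) = Nat.fib (2 * n) ∧
    stayCount T 0 (lucasOdd n) + 1 = Nat.fib (2 * n + 1) ∧
    stayCount T 0 (lucasEven (n + 1)) = Nat.fib (2 * n + 2) := by
  have step : ∀ n, stayCount T (lucasOdd n + 1) (lucasEven n - 2) = Nat.fib (2 * n) →
      stayCount T 0 (lucasOdd n) + 1 = Nat.fib (2 * n + 1) →
      stayCount T 0 (lucasEven (n + 1)) = Nat.fib (2 * n + 2) := by
    intro n h1 h2
    have h0 := two_le_lucasEven n
    have ha := lucasEven_succ n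
    have h3 := h.stayCount_zero_split n (lucasEven n - 2 + 1)
    rw [stayCount_add (lucasOdd n + 1), show lucasOdd n + 1 + (lucasEven n - 2) =
      lucasEven (n + 1) - 1 by omega, h.stayCount_lucasEven_sub_one, h1,
      show lucasOdd n + 1 + (lucasEven n - 2 + 1) = lucasEven (n + 1) by omega] at h3
    have := Nat.fib_add_two (n := 2 * n)
    omega
  have odd : ∀ n, stayCount T 0 (lucasOdd n) + 1 = Nat.fib (2 * n + 1) →
      stayCount T 0 (lucasEven (n + 1)) = Nat.fib (2 * n + 2) →
      stayCount T 0 (lucasOdd (n + 1)) + 1 = Nat.fib (2 * (n + 1) + 1) := by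
    intro n h1 h2
    have : Nat.fib (2 * n + 1 + 2) = Nat.fib (2 * n + 1) + Nat.fib (2 * n + 2) :=
      Nat.fib_add_two
    rw [lucasOdd_succ, stayCount_add, h2, zero_add, h.stayCount_even n _ le_rfl,
      show 2 * (n + 1) + 1 = 2 * n + 1 + 2 by ring]
    omega
  induction n using Nat.strong_induction_on with
  | _ n ih =>
  rcases n with _ | _ | n
  · have h1 : stayCount T (lucasOdd 0 + 1) (lucasEven 0 - 2) = Nat.fib (2 * 0) := rfl
    have h2 : stayCount T 0 (lucasOdd 0) + 1 = Nat.fib (2 * 0 + 1) := by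
      rw [lucasOdd_zero, stayCount_one, h.zero, zero_add, h.one]
      simp
    exact ⟨h1, h2, step 0 h1 h2⟩
  · obtain ⟨-, h1, h2⟩ := ih 0 (by omega)
    have h3 : stayCount T (lucasOdd 1 + 1) (lucasEven 1 - 2) = Nat.fib (2 * 1) := by
      have h4 := h.lucasOdd_add_one 1
      have h5 := h.lucasEven_sub_one 1
      simp only [lucasEven_succ, lucasOdd_succ, lucasEven_zero, lucasOdd_zero] at h4 h5 ⊢
      norm_num at h4 h5 ⊢
      rw [stayCount_one, h4, h5]
      simp
    exact ⟨h3, odd 0 h1 h2, step 1 h3 (odd 0 h1 h2)⟩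
  · obtain ⟨-, h1, -⟩ := ih n (by omega)
    obtain ⟨h2, h3, h4⟩ := ih (n + 1) (by omega)
    have h0 := two_le_lucasEven (n + 1)
    have ha : lucasEven (n + 2) = lucasOdd (n + 1) + lucasEven (n + 1) := lucasEven_succ _
    have hb := lucasOdd_succ n
    have h5 := h.stayCount_split_right n (lucasEven (n + 1) - 2) (by omega)
    rw [show lucasEven (n + 1) + lucasOdd n + (lucasEven (n + 1) - 2) =
      lucasEven (n + 2) - 2 by omega, h2] at h5
    have h6 : stayCount T (lucasOdd (n + 2) + 1) (lucasEven (n + 2) - 2) =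
        Nat.fib (2 * (n + 2)) := by
      have h7 : Nat.fib (2 * n + 3) = Nat.fib (2 * n + 1) + Nat.fib (2 * n + 2) :=
        Nat.fib_add_two
      have h8 : Nat.fib (2 * n + 4) = Nat.fib (2 * n + 2) + Nat.fib (2 * n + 3) :=
        Nat.fib_add_two
      rw [show 2 * (n + 1) = 2 * n + 2 by ring] at h5
      rw [show 2 * (n + 2) = 2 * n + 4 by ring]
      omega
    exact ⟨h6, odd (n + 1) h3 h4, step (n + 2) h6 (odd (n + 1) h3 h4)⟩

end IsPhiParity

lemma lucas_sub_sqrt_five_mul_fib (m : ℕ) :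
    (Lucas m : ℝ) - √5 * Nat.fib m = 2 * Real.goldenConj ^ m := by
  induction m using Nat.twoStepInduction with
  | zero => simp [Lucas]
  | one =>
    simp only [Lucas, Real.goldenConj, Nat.fib_one]
    push_cast
    ring
  | more m h1 h2 =>
    rw [Lucas, Nat.fib_add_two, pow_add, Real.goldenConj_sq]
    push_cast
    linear_combination h1 + h2

lemma abs_fib_sub_lucas_div_sqrt_five_le (m : ℕ) :
    |(Nat.fib m : ℝ) - Lucas m / √5| ≤ 1 := by
  have h5 : (2 : ℝ) ≤ √5 := Real.le_sqrt_of_sq_le (by norm_num)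
  have h0 : (0 : ℝ) < √5 := by linarith
  have h1 : (Nat.fib m : ℝ) - Lucas m / √5 = -(2 * Real.goldenConj ^ m) / √5 := by
    rw [← lucas_sub_sqrt_five_mul_fib]
    field_simp
    ring
  have h2 : |Real.goldenConj ^ m| ≤ 1 := by
    rw [abs_pow]
    refine pow_le_one₀ (abs_nonneg _) (abs_le.2 ⟨Real.neg_one_lt_goldenConj.le, ?_⟩)
    linarith [Real.goldenConj_neg]
  rw [h1, abs_div, abs_neg, abs_mul, abs_of_pos h0, div_le_one h0, abs_two]
  linarith

namespace IsPhiParity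

variable {T : ℕ → ℕ} (h : IsPhiParity T)

include h

lemma abs_stayCount_sub_le (n : ℕ) :
    (∀ k ≤ lucasOdd n, |(stayCount T 0 k : ℝ) - k / √5| ≤ 6 * n + 6) ∧
    (∀ k, k + 2 ≤ lucasEven n →
      |(stayCount T (lucasOdd n + 1) k : ℝ) - k / √5| ≤ 6 * n + 6) := by
  have h5 : (2 : ℝ) ≤ √5 := Real.le_sqrt_of_sq_le (by norm_num)
  have hs0 : 0 ≤ (√5)⁻¹ := by positivity
  have hs1 : (√5)⁻¹ ≤ 2⁻¹ := inv_anti₀ (by norm_num) h5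
  simp only [div_eq_mul_inv]
  set s : ℝ := (√5)⁻¹
  have fib_even (n : ℕ) : |(Nat.fib (2 * n) : ℝ) - lucasEven n * s| ≤ 1 :=
    abs_fib_sub_lucas_div_sqrt_five_le _
  have fib_odd (n : ℕ) : |(Nat.fib (2 * n + 1) : ℝ) - lucasOdd n * s| ≤ 1 :=
    abs_fib_sub_lucas_div_sqrt_five_le _
  have full_odd (n : ℕ) : |(stayCount T 0 (lucasOdd n) : ℝ) - lucasOdd n * s| ≤ 2 := by
    have h1 := abs_le.1 (fib_odd n)
    rw [← (h.stayCount_eq_fib n).2.1] at h1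
    push_cast at h1
    exact abs_le.2 ⟨by linarith, by linarith⟩
  have full_even (n : ℕ) :
      |(stayCount T 0 (lucasEven (n + 1)) : ℝ) - lucasEven (n + 1) * s| ≤ 1 := by
    rw [(h.stayCount_eq_fib n).2.2]
    exact fib_even (n + 1)
  have full_between (n : ℕ) : |(stayCount T (lucasOdd n + 1) (lucasEven n - 2) : ℝ) -
      (lucasEven n - 2 : ℕ) * s| ≤ 2 := by
    have h1 := abs_le.1 (fib_even n)
    rw [(h.stayCount_eq_fib n).1, Nat.cast_sub (two_le_lucasEven n)]
    push_cast
    exact abs_le.2 ⟨by linarith, by linarith⟩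
  have small (a k : ℕ) (hk : k ≤ 1) : |(stayCount T a k : ℝ) - k * s| ≤ 6 := by
    interval_cases k
    · simp [stayCount_zero]
    · rw [stayCount_one]
      split_ifs <;> exact abs_le.2 ⟨by push_cast; linarith, by push_cast; linarith⟩
  induction n using Nat.strong_induction_on with
  | _ n ih =>
  rcases n with _ | n
  · simp only [Nat.cast_zero, mul_zero, zero_add]
    refine ⟨fun k hk => small 0 k hk, fun k hk => small _ k ?_⟩
    rw [lucasEven_zero] at hk
    omega
  obtain ⟨ih1, ih2⟩ := ih n (by omega)
  have ha := lucasEven_succ n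
  have hb := lucasOdd_succ n
  constructor
  · intro k hk
    push_cast
    rcases le_or_gt k (lucasOdd n) with h1 | h1
    · linarith [ih1 k h1]
    rcases lt_or_ge k (lucasEven (n + 1)) with h2 | h2
    · obtain ⟨j, rfl⟩ := Nat.exists_eq_add_of_le (show lucasOdd n + 1 ≤ k by omega)
      have h3 := abs_le.1 (ih2 j (by omega))
      have h4 := abs_le.1 (full_odd n)
      have h6 : (n % 2 : ℕ) ≤ (1 : ℝ) := by exact_mod_cast (show n % 2 ≤ 1 by omega)
      have h7 : (0 : ℝ) ≤ (n % 2 : ℕ) := Nat.cast_nonneg _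
      rw [h.stayCount_zero_split]
      push_cast at h6 h7 ⊢
      exact abs_le.2 ⟨by linarith, by linarith⟩
    · obtain ⟨j, rfl⟩ := Nat.exists_eq_add_of_le h2
      have h3 := abs_le.1 (ih1 j (by omega))
      have h4 := abs_le.1 (full_even n)
      rw [stayCount_add, zero_add, h.stayCount_even n j (by omega)]
      push_cast at h3 h4 ⊢
      exact abs_le.2 ⟨by linarith, by linarith⟩
  · intro k hk
    rcases n with _ | n
    · rw [ha, lucasOdd_zero, lucasEven_zero] at hk
      have := small (lucasOdd (0 + 1) + 1) k (by omega)
      push_cast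
      linarith
    obtain ⟨ih3, -⟩ := ih n (by omega)
    have ha' : lucasEven (n + 2) = lucasOdd (n + 1) + lucasEven (n + 1) := ha
    have hb' := lucasOdd_succ n
    have h0 := two_le_lucasEven (n + 1)
    rw [show n + 1 + 1 = n + 2 from rfl] at *
    have h1 := abs_le.1 (full_between (n + 1))
    push_cast at ih2 ⊢
    rcases lt_or_ge (k + 1) (lucasEven (n + 1)) with h2 | h2
    · rw [show n + 2 = n + 1 + 1 from rfl, h.stayCount_left (n + 1) k (by omega)]
      linarith [ih2 k (by omega)]
    rcases lt_or_ge k (lucasEven (n + 1) + lucasOdd n) with h3 | h3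
    · obtain ⟨j, rfl⟩ := Nat.exists_eq_add_of_le (show lucasEven (n + 1) - 1 ≤ k by omega)
      have h4 := abs_le.1 (ih3 j (by omega))
      have h6 : ((n + 1) % 2 : ℕ) ≤ (1 : ℝ) := by exact_mod_cast (show (n + 1) % 2 ≤ 1 by omega)
      have h7 : (0 : ℝ) ≤ ((n + 1) % 2 : ℕ) := Nat.cast_nonneg _
      rw [h.stayCount_split_middle, h.stayCount_middle n j (by omega),
        show lucasEven (n + 1) - 1 + j = lucasEven (n + 1) - 2 + 1 + j by omega, Nat.cast_add,
        Nat.cast_add, Nat.cast_add (_ + 1), Nat.cast_add _ 1, Nat.cast_one]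
      exact abs_le.2 ⟨by linarith, by linarith⟩
    · obtain ⟨j, rfl⟩ := Nat.exists_eq_add_of_le h3
      have h4 := abs_le.1 (ih2 j (by omega))
      have h6 := abs_le.1 (full_odd n)
      rw [h.stayCount_split_right n j (by omega),
        show lucasEven (n + 1) + lucasOdd n + j = lucasEven (n + 1) - 2 + 2 + lucasOdd n + j by
          omega]
      simp only [Nat.cast_add, Nat.cast_one, Nat.cast_ofNat]
      exact abs_le.2 ⟨by linarith, by linarith⟩

lemma abs_stayCount_sub_le_log (x : ℕ) :
    |(stayCount T 0 x : ℝ) - x / √5| ≤ 6 * Nat.log 2 x + 12 := by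
  have h1 := (h.abs_stayCount_sub_le (Nat.log 2 x + 1)).1 x
    ((Nat.lt_pow_succ_log_self one_lt_two x).le.trans (two_pow_le_lucasOdd _))
  push_cast at h1
  linarith

/-- The words 01 and 10 alternate in `T`, so that they are almost equally frequent. -/
lemma two_mul_card_add_stayCount (x : ℕ) :
    2 * ((Finset.range x).filter fun N => T N = 0 ∧ T (N + 1) = 1).card + stayCount T 0 x =
      x + T x ∧
    2 * ((Finset.range x).filter fun N => T N = 1 ∧ T (N + 1) = 0).card + stayCount T 0 x + T x =
      x := by
  induction x with
  | zero => simp [stayCount_zero, h.zero]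
  | succ x ih =>
    have h1 := h.le_one x
    have h2 := h.le_one (x + 1)
    simp only [Finset.card_filter, Finset.sum_range_succ, stayCount_add, stayCount_one,
      zero_add] at ih ⊢
    split_ifs <;> omega

end IsPhiParity

lemma tendsto_div_of_abs_sub_le_log {f : ℕ → ℝ} {c A B : ℝ} (hA : 0 ≤ A)
    (hf : ∀ x, |f x - c * x| ≤ A * Nat.log 2 x + B) :
    Filter.Tendsto (fun x : ℕ => f x / x) Filter.atTop (nhds c) := by
  have h1 : Filter.Tendsto (fun x : ℕ => Real.log x / x) Filter.atTop (nhds 0) :=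
    Real.isLittleO_log_id_atTop.tendsto_div_nhds_zero.comp tendsto_natCast_atTop_atTop
  have h2 : Filter.Tendsto (fun x : ℕ => A / Real.log 2 * (Real.log x / x) + B / x)
      Filter.atTop (nhds 0) := by
    simpa using (h1.const_mul (A / Real.log 2)).add (tendsto_const_div_atTop_nhds_zero_nat B)
  rw [tendsto_iff_dist_tendsto_zero]
  refine squeeze_zero' (Filter.Eventually.of_forall fun x => dist_nonneg) ?_ h2
  filter_upwards [Filter.eventually_gt_atTop 0] with x hx
  have hx' : (0 : ℝ) < x := Nat.cast_pos.2 hx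
  have h3 : (Nat.log 2 x : ℝ) ≤ Real.log x / Real.log 2 := by
    exact_mod_cast Real.natLog_le_logb x 2
  rw [Real.dist_eq, show f x / x - c = (f x - c * x) / x by field_simp, abs_div, abs_of_pos hx',
    show A / Real.log 2 * (Real.log x / x) + B / x = (A * (Real.log x / Real.log 2) + B) / x by
      ring]
  gcongr
  exact (hf x).trans (by gcongr)

/-- The words 01 and 10 each have frequency 1/2 − √5/10 in the sequence `T`. -/
theorem freq_01_10 (T : ℕ → ℕ)
    (hT : ∀ (N : ℕ) (d : ℤ → ℕ), IsBasePhi N d → T N = digitSum d % 2) :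
    Filter.Tendsto
      (fun x : ℕ => (((Finset.range x).filter fun N => T N = 0 ∧ T (N + 1) = 1).card : ℝ) / x)
      Filter.atTop (nhds (1 / 2 - Real.sqrt 5 / 10)) ∧
    Filter.Tendsto
      (fun x : ℕ => (((Finset.range x).filter fun N => T N = 1 ∧ T (N + 1) = 0).card : ℝ) / x)
      Filter.atTop (nhds (1 / 2 - Real.sqrt 5 / 10)) := by
  have h := isPhiParity_of_digitSum T hT
  have hc : 1 / 2 - √5 / 10 = (1 - 1 / √5) / 2 := by
    field_simp
    nlinarith [Real.sq_sqrt (show (0 : ℝ) ≤ 5 by norm_num)]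
  have hT1 (x : ℕ) : (T x : ℝ) ≤ 1 := by exact_mod_cast h.le_one x
  have hT0 (x : ℕ) : (0 : ℝ) ≤ T x := Nat.cast_nonneg _
  rw [hc]
  constructor <;>
  · refine tendsto_div_of_abs_sub_le_log (A := 6) (B := 13) (by norm_num) fun x => ?_
    obtain ⟨h1, h2⟩ := h.two_mul_card_add_stayCount x
    have h3 := abs_le.1 (h.abs_stayCount_sub_le_log x)
    have hlog : (0 : ℝ) ≤ Nat.log 2 x := Nat.cast_nonneg _
    replace h1 := congrArg (Nat.cast (R := ℝ)) h1
    replace h2 := congrArg (Nat.cast (R := ℝ)) h2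
    simp only [Nat.cast_add, Nat.cast_mul, Nat.cast_ofNat] at h1 h2
    rw [show (1 - 1 / √5) / 2 * x = (x - x / √5) / 2 by ring]
    exact abs_le.2 ⟨by linarith [hT1 x, hT0 x], by linarith [hT1 x, hT0 x]⟩
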